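/- arXiv:1908.03912 — 4 statements merged into one kernel-verified Lean document; each statement's English description precedes it below -/
import Mathlib

section
/- For all integers n ≥ 1 and 1 ≤ k ≤ n, r(n,k) = r(n-1,k-1) + Σ_{j=k}^{n-1} 2^{j-k} · r(n-1,j). -/
/-!
The recurrence is proved by counting paths that start at an arbitrary height. Let `c h n k` be the
number of words that lead from height `h` down to height `0` without going below it, have `n` steps
`U` or `H`, and have `k` hills. Splitting off the first step gives
* `c (h+1) (n+1) k = c (h+2) n k + c (h+1) n k + c h (n+1) k`,
* `c 0 (n+1) (k+1) = c 1 n (k+1) + c 0 n k` and `c 0 (n+1) 0 = c 1 n 0`.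

In the second line, the words starting with `H` make up for the words `U D w`, which `c 1 n` counts
without their first hill.

The key identity `c (h+1) n k = c h n k + 2 * c (h+1) n (k+1)` (`pathCount_key`) follows from these
by induction on `n` and then `h`. Iterating it at `h = 0` yields
`c 1 n k = ∑ j ∈ Ico k (n+1), 2 ^ (j-k) * c 0 n j`, since there are at most `n` hills, and
substituting this into `c 0 (n+1) (k+1) = c 1 n (k+1) + c 0 n k` is the theorem.
-/

/-- A step of a Schröder path: up `(1,1)`, down `(1,-1)`, or horizontal `(2,0)`. -/
inductive SStep : Type
  | U | D | H
  deriving DecidableEq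

/-- `IsSchroeder n w` : `w` is a Schröder path of semilength `n`. -/
def IsSchroeder (n : ℕ) (w : List SStep) : Prop :=
  w.count SStep.U = w.count SStep.D ∧
  w.count SStep.U + w.count SStep.H = n ∧
  ∀ i : ℕ, (w.take i).count SStep.D ≤ (w.take i).count SStep.U

/-- The number of hills: occurrences of the factor `UD` starting at height `0`. -/
def hills (w : List SStep) : ℕ :=
  ((Finset.range w.length).filter (fun i =>
    w[i]? = some SStep.U ∧ w[i+1]? = some SStep.D ∧
    (w.take i).count SStep.U = (w.take i).count SStep.D)).card

/-- The number of horizontal steps at height `0`. -/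
def h0 (w : List SStep) : ℕ :=
  ((Finset.range w.length).filter (fun i =>
    w[i]? = some SStep.H ∧
    (w.take i).count SStep.U = (w.take i).count SStep.D)).card

/-- The number of horizontal steps at positive height. -/
def hpos (w : List SStep) : ℕ :=
  ((Finset.range w.length).filter (fun i =>
    w[i]? = some SStep.H ∧
    (w.take i).count SStep.D < (w.take i).count SStep.U)).card

/-- `r n k` : the number of Schröder paths of semilength `n` with exactly `k` hills. -/
noncomputable def r (n k : ℕ) : ℕ :=
  Nat.card {w : List SStep // IsSchroeder n w ∧ hills w = k}

/-- A little Schröder path: a Schröder path with no horizontal step at height `0`. -/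
def IsLittle (n : ℕ) (w : List SStep) : Prop :=
  IsSchroeder n w ∧ h0 w = 0

/-- `s n k` : the number of little Schröder paths of semilength `n` with exactly `k` hills. -/
noncomputable def s (n k : ℕ) : ℕ :=
  Nat.card {w : List SStep // IsLittle n w ∧ hills w = k}

/-- `w` leads from height `h` to height `0`, never goes below height `0`, and has `n` steps that
are `U` or `H`. For `h = 0` this is `IsSchroeder n w`. -/
def IsPathFrom (h n : ℕ) (w : List SStep) : Prop :=
  w.count SStep.U + h = w.count SStep.D ∧
  w.count SStep.U + w.count SStep.H = n ∧
  ∀ i : ℕ, (w.take i).count SStep.D ≤ (w.take i).count SStep.U + h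

/-- The number of hills of `w` read as a path that starts at height `h`. -/
def hillsFrom (h : ℕ) (w : List SStep) : ℕ :=
  ((Finset.range w.length).filter (fun i =>
    w[i]? = some SStep.U ∧ w[i+1]? = some SStep.D ∧
    (w.take i).count SStep.U + h = (w.take i).count SStep.D)).card

/-- The paths from height `h` to height `0` with `n` steps `U` or `H` and with `k` hills. -/
def pathSet (h n k : ℕ) : Set (List SStep) :=
  {w | IsPathFrom h n w ∧ hillsFrom h w = k}

/-- The number of paths from height `h` to height `0` with `n` steps `U` or `H` and `k` hills. -/
noncomputable def pathCount (h n k : ℕ) : ℕ := (pathSet h n k).ncard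

/-! ### Splitting off the first step -/

lemma isPathFrom_nil (h n : ℕ) : IsPathFrom h n [] ↔ h = 0 ∧ n = 0 := by
  simp [IsPathFrom]
  omega

lemma isPathFrom_U (h n : ℕ) (w : List SStep) :
    IsPathFrom h n (SStep.U :: w) ↔ ∃ m, n = m + 1 ∧ IsPathFrom (h + 1) m w := by
  constructor
  · rintro ⟨h1, h2, h3⟩
    simp at h1 h2
    refine ⟨n - 1, by omega, by omega, by omega, fun i => ?_⟩
    have := h3 (i + 1)
    simp at this
    omega
  · rintro ⟨m, rfl, h1, h2, h3⟩
    refine ⟨by simp; omega, by simp; omega, fun i => ?_⟩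
    cases i with
    | zero => simp
    | succ i =>
      have := h3 i
      simp
      omega

lemma isPathFrom_H (h n : ℕ) (w : List SStep) :
    IsPathFrom h n (SStep.H :: w) ↔ ∃ m, n = m + 1 ∧ IsPathFrom h m w := by
  constructor
  · rintro ⟨h1, h2, h3⟩
    simp at h1 h2
    refine ⟨n - 1, by omega, by omega, by omega, fun i => ?_⟩
    have := h3 (i + 1)
    simp at this
    omega
  · rintro ⟨m, rfl, h1, h2, h3⟩
    refine ⟨by simp; omega, by simp; omega, fun i => ?_⟩
    cases i with
    | zero => simp
    | succ i =>
      have := h3 i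
      simp
      omega

lemma isPathFrom_D (h n : ℕ) (w : List SStep) :
    IsPathFrom h n (SStep.D :: w) ↔ ∃ g, h = g + 1 ∧ IsPathFrom g n w := by
  constructor
  · rintro ⟨h1, h2, h3⟩
    have h4 := h3 1
    simp at h1 h2 h4
    refine ⟨h - 1, by omega, by omega, by omega, fun i => ?_⟩
    have := h3 (i + 1)
    simp at this
    omega
  · rintro ⟨m, rfl, h1, h2, h3⟩
    refine ⟨by simp; omega, by simp; omega, fun i => ?_⟩
    cases i with
    | zero => simp
    | succ i =>
      have := h3 i
      simp
      omega

lemma hillsFrom_nil (h : ℕ) : hillsFrom h [] = 0 := by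
  simp [hillsFrom]

lemma hillsFrom_H (h : ℕ) (w : List SStep) : hillsFrom h (SStep.H :: w) = hillsFrom h w := by
  simp [hillsFrom, Finset.card_filter, Finset.sum_range_succ', -Finset.sum_boole]

lemma hillsFrom_D (h : ℕ) (w : List SStep) :
    hillsFrom (h + 1) (SStep.D :: w) = hillsFrom h w := by
  simp [hillsFrom, Finset.card_filter, Finset.sum_range_succ', -Finset.sum_boole, ← add_assoc]

lemma hillsFrom_U (h : ℕ) (w : List SStep) :
    hillsFrom h (SStep.U :: w) =
      hillsFrom (h + 1) w + if h = 0 ∧ w[0]? = some SStep.D then 1 else 0 := by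
  simp [hillsFrom, Finset.card_filter, Finset.sum_range_succ', -Finset.sum_boole, add_assoc,
    add_comm 1 h, and_comm]

lemma hillsFrom_U_succ (h : ℕ) (w : List SStep) :
    hillsFrom (h + 1) (SStep.U :: w) = hillsFrom (h + 2) w := by
  simp [hillsFrom_U]

lemma isPathFrom_length_le {h n : ℕ} {w : List SStep} (hw : IsPathFrom h n w) :
    w.length ≤ 2 * n + h := by
  have key : w.length = w.count SStep.U + w.count SStep.D + w.count SStep.H := by
    clear hw
    induction w with
    | nil => rfl
    | cons a w ih => cases a <;> simp [ih] <;> omega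
  obtain ⟨h1, h2, -⟩ := hw
  omega

instance : Finite SStep :=
  Finite.of_surjective (fun i : Fin 3 => ![SStep.U, SStep.D, SStep.H] i) fun a => by
    cases a
    exacts [⟨0, rfl⟩, ⟨1, rfl⟩, ⟨2, rfl⟩]

instance pathSet_finite (h n k : ℕ) : Finite (pathSet h n k) :=
  (List.finite_length_le SStep (2 * n + h)).subset fun _ hw => isPathFrom_length_le hw.1

/-! ### Recurrences for the counts -/

lemma cons_ncard (a : SStep) (s : Set (List SStep)) : ((a :: ·) '' s).ncard = s.ncard :=
  Set.ncard_image_of_injective s List.cons_injective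

lemma pathCount_zero_zero (k : ℕ) : pathCount 0 0 k = if k = 0 then 1 else 0 := by
  have : pathSet 0 0 k = if k = 0 then {[]} else ∅ := by
    ext w
    rcases w with _ | ⟨_ | _ | _, w⟩ <;> split_ifs <;>
      simp_all [pathSet, isPathFrom_nil, isPathFrom_U, isPathFrom_D, isPathFrom_H, hillsFrom_nil,
        eq_comm]
  rw [pathCount, this]
  split_ifs <;> simp

lemma pathCount_succ_zero (h k : ℕ) : pathCount (h + 1) 0 k = pathCount h 0 k := by
  have : pathSet (h + 1) 0 k = (SStep.D :: ·) '' pathSet h 0 k := by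
    ext w
    rcases w with _ | ⟨_ | _ | _, w⟩ <;>
      simp [pathSet, isPathFrom_nil, isPathFrom_U, isPathFrom_D, isPathFrom_H, hillsFrom_D]
  rw [pathCount, this, cons_ncard, pathCount]

lemma pathCount_succ_succ (h n k : ℕ) :
    pathCount (h + 1) (n + 1) k =
      pathCount (h + 2) n k + pathCount (h + 1) n k + pathCount h (n + 1) k := by
  have : pathSet (h + 1) (n + 1) k =
      (SStep.U :: ·) '' pathSet (h + 2) n k ∪ (SStep.H :: ·) '' pathSet (h + 1) n k ∪
        (SStep.D :: ·) '' pathSet h (n + 1) k := by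
    ext w
    rcases w with _ | ⟨_ | _ | _, w⟩ <;>
      simp [pathSet, isPathFrom_nil, isPathFrom_U, isPathFrom_D, isPathFrom_H, hillsFrom_D,
        hillsFrom_H, hillsFrom_U_succ]
  rw [pathCount, this, Set.ncard_union_eq, Set.ncard_union_eq, cons_ncard, cons_ncard, cons_ncard,
    pathCount, pathCount, pathCount]
  · rw [Set.disjoint_left]
    rintro _ ⟨w, -, rfl⟩ ⟨v, -, hv⟩
    simp at hv
  · rw [Set.disjoint_left]
    rintro _ (⟨w, -, rfl⟩ | ⟨w, -, rfl⟩) ⟨v, -, hv⟩ <;> simp at hv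

/-- The first-step recurrence at height `0`, uniform in `k`: the last summand counts the words
starting with the hill `U D`. -/
lemma pathCount_zero_succ_aux (n k : ℕ) :
    pathCount 0 (n + 1) k =
      pathCount 1 n k + {w | IsPathFrom 0 n w ∧ hillsFrom 0 w + 1 = k}.ncard := by
  set T : Set (List SStep) := {w | IsPathFrom 0 n w ∧ hillsFrom 0 w + 1 = k} with hT
  have hTfin : Finite T := (List.finite_length_le SStep (2 * n + 0)).subset
    fun _ hw => isPathFrom_length_le hw.1
  have hsub : (SStep.D :: ·) '' pathSet 0 n k ⊆ pathSet 1 n k := by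
    rintro _ ⟨w, hw, rfl⟩
    exact ⟨(isPathFrom_D _ _ _).2 ⟨0, rfl, hw.1⟩, (hillsFrom_D 0 w).trans hw.2⟩
  have hset : pathSet 0 (n + 1) k =
      (SStep.H :: ·) '' pathSet 0 n k ∪
        (SStep.U :: ·) '' (pathSet 1 n k \ (SStep.D :: ·) '' pathSet 0 n k) ∪
          (SStep.U :: ·) '' ((SStep.D :: ·) '' T) := by
    ext w
    rcases w with _ | ⟨_ | _ | _, _ | ⟨_ | _ | _, w⟩⟩ <;>
      simp [pathSet, hT, isPathFrom_nil, isPathFrom_U, isPathFrom_D, isPathFrom_H, hillsFrom_D,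
        hillsFrom_H, hillsFrom_U, hillsFrom_nil]
  have hdiff := Set.ncard_sdiff_add_ncard_of_subset hsub
  rw [cons_ncard] at hdiff
  rw [pathCount, hset, Set.ncard_union_eq, Set.ncard_union_eq, cons_ncard, cons_ncard, cons_ncard,
    cons_ncard, pathCount]
  · omega
  · rw [Set.disjoint_left]
    rintro _ ⟨w, -, rfl⟩ ⟨v, -, hv⟩
    simp at hv
  · rw [Set.disjoint_left]
    rintro _ (⟨w, -, rfl⟩ | ⟨w, hw, rfl⟩) ⟨_, ⟨v, hvT, rfl⟩, hv⟩
    · simp at hv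
    -- Both words are `U D v`, and `D v` with `k` hills was removed from `pathSet 1 n k`.
    · simp only [List.cons.injEq, true_and] at hv
      subst hv
      obtain ⟨⟨-, h2⟩, h3⟩ := hw
      exact h3 ⟨v, ⟨hvT.1, by rwa [hillsFrom_D] at h2⟩, rfl⟩

lemma pathCount_zero_succ_zero (n : ℕ) : pathCount 0 (n + 1) 0 = pathCount 1 n 0 := by
  simp [pathCount_zero_succ_aux]

lemma pathCount_zero_succ_succ (n k : ℕ) :
    pathCount 0 (n + 1) (k + 1) = pathCount 1 n (k + 1) + pathCount 0 n k := by
  rw [pathCount_zero_succ_aux]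
  simp [pathCount, pathSet]

/-! ### The key identity -/

lemma pathCount_zero_right (h k : ℕ) : pathCount h 0 k = if k = 0 then 1 else 0 := by
  induction h with
  | zero => exact pathCount_zero_zero k
  | succ h ih => rw [pathCount_succ_zero, ih]

lemma pathCount_eq_zero {h n k : ℕ} (hk : n < k) : pathCount h n k = 0 := by
  induction n generalizing h k with
  | zero => rw [pathCount_zero_right, if_neg (by omega)]
  | succ n ihn =>
    induction h with
    | zero =>
      obtain ⟨k, rfl⟩ : ∃ j, k = j + 1 := ⟨k - 1, by omega⟩
      rw [pathCount_zero_succ_succ, ihn (by omega), ihn (by omega)]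
    | succ h ihh => rw [pathCount_succ_succ, ihn (by omega), ihn (by omega), ihh]

/-- In terms of generating functions, the paths from height `h` with `k` hills have series
`S ^ h * R k`, where `S` counts all Schröder paths, and the identity is `S * R k = R k + 2 * S *
R (k + 1)` multiplied by `S ^ h`. -/
lemma pathCount_key (h n k : ℕ) :
    pathCount (h + 1) n k = pathCount h n k + 2 * pathCount (h + 1) n (k + 1) := by
  induction n generalizing h k with
  | zero => simp [pathCount_zero_right]
  | succ n ihn =>
    induction h generalizing k with
    | zero =>
      have e1 := pathCount_succ_succ 0 n k
      have e2 := pathCount_succ_succ 0 n (k + 1)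
      have e3 := pathCount_zero_succ_succ n k
      have e4 := ihn 1 k
      have e5 := ihn 0 k
      simp only [Nat.zero_add, Nat.reduceAdd] at *
      omega
    | succ h ihh =>
      have e1 := pathCount_succ_succ (h + 1) n k
      have e2 := pathCount_succ_succ (h + 1) n (k + 1)
      have e3 := pathCount_succ_succ h n k
      have e4 := ihn (h + 2) k
      have e5 := ihn (h + 1) k
      have e6 := ihh k
      simp only [add_assoc, Nat.reduceAdd] at *
      omega

/-- The key identity at height `0`, iterated `m` times. -/
lemma pathCount_one_iterate (n k m : ℕ) :
    pathCount 1 n k = ∑ j ∈ Finset.Ico k (k + m), 2 ^ (j - k) * pathCount 0 n j +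
      2 ^ m * pathCount 1 n (k + m) := by
  induction m with
  | zero => simp
  | succ m ih =>
    rw [ih, ← add_assoc, Finset.sum_Ico_succ_top (by omega), pathCount_key 0 n (k + m)]
    simp only [Nat.zero_add, Nat.add_sub_cancel_left]
    ring

lemma r_eq_pathCount (n k : ℕ) : r n k = pathCount 0 n k := by
  rw [r, pathCount, ← Nat.card_coe_set_eq]
  rfl

/-- For all integers `n ≥ 1` and `1 ≤ k ≤ n`,
`r(n,k) = r(n-1,k-1) + Σ_{j=k}^{n-1} 2^{j-k} ⬝ r(n-1,j)`. -/
theorem stmt1 (n k : ℕ) (hn : 1 ≤ n) (hk : 1 ≤ k) (hkn : k ≤ n) :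
    r n k = r (n - 1) (k - 1) + ∑ j ∈ Finset.Ico k n, 2 ^ (j - k) * r (n - 1) j := by
  obtain ⟨n, rfl⟩ : ∃ m, n = m + 1 := ⟨n - 1, by omega⟩
  obtain ⟨k, rfl⟩ : ∃ j, k = j + 1 := ⟨k - 1, by omega⟩
  obtain ⟨m, rfl⟩ : ∃ m, n = k + m := ⟨n - k, by omega⟩
  simp only [r_eq_pathCount, Nat.add_sub_cancel]
  rw [pathCount_zero_succ_succ, pathCount_one_iterate (k + m) (k + 1) m,
    pathCount_eq_zero (h := 1) (show k + m < k + 1 + m by omega),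
    show k + m + 1 = k + 1 + m by omega]
  ring
end

section
/- For every integer n ≥ 2, s(n,0) = Σ_{j=1}^{n-1} 2·3^{j-1} · s(n-1,j). -/
/-! ### Trees and words -/

/-- Schröder paths by first-return decomposition: the empty path, `H w`, and `U a D b`. -/
inductive STree : Type
  | nil : STree
  | hor : STree → STree
  | up : STree → STree → STree
  deriving DecidableEq

namespace STree

/-- The word of a tree. -/
def toList : STree → List SStep
  | nil => []
  | hor t => SStep.H :: toList t
  | up a b => SStep.U :: (toList a ++ SStep.D :: toList b)

/-- The semilength. -/
def size : STree → ℕ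
  | nil => 0
  | hor t => size t + 1
  | up a b => size a + size b + 1

/-- The number of hills. -/
def hillCount : STree → ℕ
  | nil => 0
  | hor t => hillCount t
  | up a b => (if a = nil then 1 else 0) + hillCount b

/-- The number of horizontal steps at height `0`. -/
def horCount : STree → ℕ
  | nil => 0
  | hor t => horCount t + 1
  | up _ b => horCount b

/-- Right-to-left stack parser: on a word `t₀ D t₁ D ⋯ D tₕ` it returns `t₀` and `[t₁, …, tₕ]`. An
unmatched `U` gives a junk value. -/
def parse : List SStep → STree × List STree
  | [] => (nil, [])
  | SStep.H :: w => (hor (parse w).1, (parse w).2)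
  | SStep.D :: w => (nil, (parse w).1 :: (parse w).2)
  | SStep.U :: w =>
    match (parse w).2 with
    | [] => (nil, [])
    | t :: ts => (up (parse w).1 t, ts)

theorem parse_toList_append (t : STree) (w : List SStep) (hw : (parse w).1 = nil) :
    parse (toList t ++ w) = (t, (parse w).2) := by
  induction t generalizing w with
  | nil => simp [toList, ← hw]
  | hor t ih => simp [toList, parse, ih w hw]
  | up a b iha ihb =>
    have h := iha (SStep.D :: (toList b ++ w)) (by simp [parse])
    simp [toList, parse, h, ihb w hw]

theorem parse_toList (t : STree) : (parse (toList t)).1 = t := by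
  have := parse_toList_append t [] (by simp [parse])
  simp at this
  simp [this]

theorem toList_injective : Function.Injective toList := fun a b h => by
  rw [← parse_toList a, h, parse_toList]

/-- A path from height `h` down to `0` that stays nonnegative is `t₀ D t₁ D ⋯ D tₕ`. The starting
height is arbitrary so that the induction can run over the letters of the word. -/
theorem exists_toList_aux (w : List SStep) (h : ℕ)
    (hc : w.count SStep.U + h = w.count SStep.D)
    (hp : ∀ i, (w.take i).count SStep.D ≤ (w.take i).count SStep.U + h) :
    ∃ (t : STree) (ts : List STree), ts.length = h ∧
      w = toList t ++ ts.flatMap (fun t => SStep.D :: toList t) := by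
  induction w generalizing h with
  | nil =>
    have : h = 0 := by simpa using hc
    exact ⟨nil, [], by simp [this], by simp [toList]⟩
  | cons x w ih =>
    cases x with
    | H =>
      obtain ⟨t, ts, h1, h2⟩ := ih h (by simpa using hc) (fun i => by simpa using hp (i + 1))
      exact ⟨hor t, ts, h1, by simp [toList, ← h2]⟩
    | D =>
      have h0 := hp 1
      simp at h0
      obtain ⟨k, rfl⟩ : ∃ k, h = k + 1 := ⟨h - 1, by omega⟩
      obtain ⟨t, ts, h1, h2⟩ := ih k (by simp at hc; omega)
        (fun i => by have := hp (i + 1); simp at this; omega)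
      exact ⟨nil, t :: ts, by simp [h1], by simp [toList, ← h2]⟩
    | U =>
      obtain ⟨t, ts, h1, h2⟩ := ih (h + 1) (by simp at hc; omega)
        (fun i => by have := hp (i + 1); simp at this; omega)
      cases ts with
      | nil => simp at h1
      | cons t' ts =>
        exact ⟨up t t', ts, by simpa using h1, by simp [toList, h2]⟩

theorem count_toList (t : STree) :
    (toList t).count SStep.U = (toList t).count SStep.D ∧
    (toList t).count SStep.U + (toList t).count SStep.H = size t := by
  induction t with
  | nil => simp [toList, size]
  | hor t ih => simp [toList, size]; omega
  | up a b iha ihb => simp [toList, size]; omega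

theorem take_toList (t : STree) (i : ℕ) :
    ((toList t).take i).count SStep.D ≤ ((toList t).take i).count SStep.U := by
  induction t generalizing i with
  | nil => simp [toList]
  | hor t ih =>
    cases i with
    | zero => simp
    | succ i => simpa [toList] using ih i
  | up a b iha ihb =>
    cases i with
    | zero => simp
    | succ i =>
      have h1 := iha i
      simp only [toList, List.take_succ_cons, List.take_append, List.count_append,
        List.count_cons_self]
      rcases (i - (toList a).length) with _ | j
      · simp; omega
      · have h2 := ihb j
        simp; omega

theorem isSchroeder_toList (t : STree) : IsSchroeder (size t) (toList t) :=
  ⟨(count_toList t).1, (count_toList t).2, take_toList t⟩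

theorem exists_toList {n : ℕ} {w : List SStep} (hw : IsSchroeder n w) :
    ∃ t, size t = n ∧ toList t = w := by
  obtain ⟨t, ts, h1, h2⟩ := exists_toList_aux w 0 (by simpa using hw.1) (by simpa using hw.2.2)
  obtain rfl : ts = [] := by simpa using h1
  obtain rfl : w = toList t := by simpa using h2
  exact ⟨t, by rw [← (count_toList t).2, hw.2.1], rfl⟩

/-! ### Hills and horizontal steps at height zero -/

theorem hills_eq_count (w : List SStep) : hills w = Nat.count (fun i =>
    w[i]? = some SStep.U ∧ w[i+1]? = some SStep.D ∧
    (w.take i).count SStep.U = (w.take i).count SStep.D) w.length := by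
  rw [Nat.count_eq_card_filter_range]; rfl

theorem h0_eq_count (w : List SStep) : h0 w = Nat.count (fun i =>
    w[i]? = some SStep.H ∧
    (w.take i).count SStep.U = (w.take i).count SStep.D) w.length := by
  rw [Nat.count_eq_card_filter_range]; rfl

theorem hills_hor (w : List SStep) : hills (SStep.H :: w) = hills w := by
  rw [hills_eq_count, hills_eq_count, List.length_cons, Nat.count_succ']
  simp

theorem h0_hor (w : List SStep) : h0 (SStep.H :: w) = h0 w + 1 := by
  rw [h0_eq_count, h0_eq_count, List.length_cons, Nat.count_succ']
  simp

/-- Strictly inside the first block `U a D` of a path the height is positive. -/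
theorem height_pos (a : STree) (v : List SStep) (i : ℕ) (hi : i < (toList a).length + 1) :
    ((SStep.U :: (toList a ++ v)).take (i + 1)).count SStep.U ≠
      ((SStep.U :: (toList a ++ v)).take (i + 1)).count SStep.D := by
  have h := take_toList a i
  have h0 : i - (toList a).length = 0 := by omega
  simp [List.take_append, h0]
  omega

theorem count_eq_zero_of_forall (p : ℕ → Prop) [DecidablePred p] (n : ℕ)
    (h : ∀ i < n, ¬ p i) : Nat.count p n = 0 := by
  rw [Nat.count_eq_card_filter_range, Finset.card_eq_zero, Finset.filter_eq_empty_iff]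
  intro i hi
  exact h i (Finset.mem_range.1 hi)

theorem getElem?_block (a b : STree) (k : ℕ) :
    (SStep.U :: (toList a ++ SStep.D :: toList b))[(toList a).length + 2 + k]? =
      (toList b)[k]? := by
  rw [show (toList a).length + 2 + k = ((toList a).length + (k + 1)) + 1 by omega,
    List.getElem?_cons_succ, List.getElem?_append_right (by omega)]
  simp

theorem take_block (a b : STree) (k : ℕ) :
    (SStep.U :: (toList a ++ SStep.D :: toList b)).take ((toList a).length + 2 + k) =
      SStep.U :: (toList a ++ SStep.D :: (toList b).take k) := by
  rw [show (toList a).length + 2 + k = ((toList a).length + (k + 1)) + 1 by omega,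
    List.take_succ_cons, List.take_length_add_append]
  simp

/-- Past the first block `U a D`, the height vanishes exactly where the height in `b` does. -/
theorem height_block (a b : STree) (k : ℕ) :
    ((SStep.U :: (toList a ++ SStep.D :: toList b)).take
        ((toList a).length + 2 + k)).count SStep.U =
      ((SStep.U :: (toList a ++ SStep.D :: toList b)).take
        ((toList a).length + 2 + k)).count SStep.D ↔
    ((toList b).take k).count SStep.U = ((toList b).take k).count SStep.D := by
  rw [take_block]
  have := (count_toList a).1
  simp
  omega

theorem hills_up (a b : STree) :
    hills (SStep.U :: (toList a ++ SStep.D :: toList b)) =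
      (if a = nil then 1 else 0) + hills (toList b) := by
  rw [hills_eq_count, hills_eq_count,
    show (SStep.U :: (toList a ++ SStep.D :: toList b)).length =
      ((toList a).length + 2) + (toList b).length by simp; omega, Nat.count_add]
  congr 1
  · rw [Nat.count_succ', count_eq_zero_of_forall _ _
      (fun i hi h => height_pos a _ i hi h.2.2)]
    cases a <;> simp [toList]
  · congr 1
    funext k
    rw [getElem?_block, height_block, show (toList a).length + 2 + k + 1 =
      (toList a).length + 2 + (k + 1) by omega, getElem?_block]

theorem h0_up (a b : STree) :
    h0 (SStep.U :: (toList a ++ SStep.D :: toList b)) = h0 (toList b) := by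
  rw [h0_eq_count, h0_eq_count,
    show (SStep.U :: (toList a ++ SStep.D :: toList b)).length =
      ((toList a).length + 2) + (toList b).length by simp; omega, Nat.count_add]
  rw [Nat.count_succ', count_eq_zero_of_forall _ _
      (fun i hi h => height_pos a _ i hi h.2)]
  simp [getElem?_block, height_block]

theorem hills_toList (t : STree) : hills (toList t) = hillCount t := by
  induction t with
  | nil => simp [toList, hills, hillCount]
  | hor t ih => rw [toList, hills_hor, ih, hillCount]
  | up a b _ ihb => rw [toList, hills_up, ihb, hillCount]

theorem h0_toList (t : STree) : h0 (toList t) = horCount t := by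
  induction t with
  | nil => simp [toList, h0, horCount]
  | hor t ih => rw [toList, h0_hor, ih, horCount]
  | up a b _ ihb => rw [toList, h0_up, ihb, horCount]

theorem hillCount_le_size (t : STree) : hillCount t ≤ size t := by
  induction t with
  | nil => simp [hillCount, size]
  | hor t ih => simp only [hillCount, size]; omega
  | up a b _ ihb => simp only [hillCount, size]; split_ifs <;> omega

/-! ### Enumeration by semilength -/

/-- The finite set of trees of semilength `n`. -/
def trees : ℕ → Finset STree
  | 0 => {nil}
  | n + 1 => (trees n).image hor ∪
      (Finset.univ : Finset (Fin (n + 1))).biUnion fun i =>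
        (trees i ×ˢ trees (n - i)).image fun p => up p.1 p.2

theorem mem_trees (t : STree) (n : ℕ) : t ∈ trees n ↔ size t = n := by
  induction t generalizing n with
  | nil => cases n <;> simp [trees, size]
  | hor t ih => cases n <;> simp [trees, size, ih]
  | up a b iha ihb =>
    cases n with
    | zero => simp [trees, size]
    | succ n =>
      simp only [trees, size, Finset.mem_union, Finset.mem_image, Finset.mem_biUnion,
        Finset.mem_univ, true_and, Finset.mem_product, Prod.exists, reduceCtorEq, and_false,
        exists_false, false_or, up.injEq]
      constructor
      · rintro ⟨i, a', b', ⟨h1, h2⟩, rfl, rfl⟩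
        have := (iha _).1 h1
        have := (ihb _).1 h2
        have := i.2
        omega
      · intro h
        exact ⟨⟨size a, by omega⟩, a, b, ⟨(iha _).2 rfl, (ihb _).2 (by simp; omega)⟩, rfl, rfl⟩

theorem sum_trees_succ (f : STree → ℤ) (n : ℕ) :
    ∑ t ∈ trees (n + 1), f t = ∑ t ∈ trees n, f (hor t) +
      ∑ p ∈ Finset.HasAntidiagonal.antidiagonal n, ∑ a ∈ trees p.1, ∑ b ∈ trees p.2, f (up a b) := by
  have hdec : trees (n + 1) = (trees n).image hor ∪
      (Finset.HasAntidiagonal.antidiagonal n).biUnion fun p =>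
        (trees p.1 ×ˢ trees p.2).image fun q => up q.1 q.2 := by
    ext t
    cases t with
    | nil => simp [mem_trees, size]
    | hor t => simp [mem_trees, size]
    | up a b => simp [mem_trees, size]
  rw [hdec, Finset.sum_union, Finset.sum_biUnion, Finset.sum_image]
  · congr 1
    refine Finset.sum_congr rfl fun p _ => ?_
    rw [Finset.sum_image, Finset.sum_product]
    rintro ⟨a, b⟩ _ ⟨c, d⟩ _ h
    simpa using h
  · intro a _ b _ h
    simpa using h
  · rintro ⟨i, j⟩ _ ⟨k, l⟩ _ hne
    refine Finset.disjoint_left.2 fun t h1 h2 => hne ?_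
    simp only [Finset.mem_image, Finset.mem_product, mem_trees, Prod.exists] at h1 h2
    obtain ⟨a, b, ⟨rfl, rfl⟩, rfl⟩ := h1
    obtain ⟨c, d, ⟨rfl, rfl⟩, h⟩ := h2
    simp only [up.injEq] at h
    simp [h]
  · refine Finset.disjoint_left.2 fun t h1 h2 => ?_
    cases t <;> simp at h1 h2

theorem s_eq_card (n k : ℕ) :
    s n k = ((trees n).filter fun t => horCount t = 0 ∧ hillCount t = k).card := by
  have e : Nat.card {t : STree // size t = n ∧ horCount t = 0 ∧ hillCount t = k} = s n k := by
    refine Nat.card_congr (Equiv.ofBijective (fun t => ⟨toList t.1, ?_⟩) ⟨?_, ?_⟩)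
    · obtain ⟨t, rfl, h1, h2⟩ := t
      exact ⟨⟨isSchroeder_toList t, by rw [h0_toList, h1]⟩, by rw [hills_toList, h2]⟩
    · intro a b h
      exact Subtype.ext (toList_injective (congrArg Subtype.val h))
    · rintro ⟨w, ⟨h1, h2⟩, h3⟩
      obtain ⟨t, ht, rfl⟩ := exists_toList h1
      exact ⟨⟨t, ht, by rw [← h0_toList, h2], by rw [← hills_toList, h3]⟩, rfl⟩
  rw [← e]
  exact Nat.subtype_card _ (by simp [mem_trees])

/-! ### Generating functions -/

open PowerSeries

/-- `y ^ hills` on little Schröder paths, and `0` on the other Schröder paths. -/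
def weight (y : ℤ) (t : STree) : ℤ := if horCount t = 0 then y ^ hillCount t else 0

/-- The generating function of Schröder paths. -/
noncomputable def genR : PowerSeries ℤ := PowerSeries.mk fun n => ∑ _t ∈ trees n, (1 : ℤ)

/-- The generating function of little Schröder paths, with `y` marking hills. -/
noncomputable def genA (y : ℤ) : PowerSeries ℤ := PowerSeries.mk fun n => ∑ t ∈ trees n, weight y t

theorem genR_eq : genR = 1 + X * (genR + genR * genR) := by
  ext n
  cases n with
  | zero => simp [genR, trees]
  | succ n =>
    rw [map_add, coeff_succ_X_mul, map_add, coeff_mul]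
    simp only [genR, coeff_mk, sum_trees_succ]
    simp [coeff_one]

theorem coeff_block (y : ℤ) (i : ℕ) :
    coeff i (genR - 1 + C y) = ∑ a ∈ trees i, if a = nil then y else 1 := by
  cases i with
  | zero => simp [genR, trees]
  | succ i =>
    rw [Finset.sum_congr rfl (g := fun _ => (1 : ℤ))]
    · have hC : coeff (i + 1) (C y) = 0 := by rw [coeff_C, if_neg (Nat.succ_ne_zero i)]
      rw [map_add, hC]
      simp [genR, coeff_one]
    · rintro a ha
      rw [if_neg]
      rintro rfl
      simp [mem_trees, size] at ha

theorem genA_eq (y : ℤ) : genA y = 1 + X * ((genR - 1 + C y) * genA y) := by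
  ext n
  cases n with
  | zero => simp [genA, trees, weight, horCount, hillCount]
  | succ n =>
    rw [map_add, coeff_succ_X_mul, coeff_mul]
    simp only [coeff_block, genA, coeff_mk, sum_trees_succ, Finset.sum_mul_sum]
    have h1 : ∀ t, weight y (hor t) = 0 := fun t => by simp [weight, horCount]
    have h2 : ∀ a b, weight y (up a b) = (if a = nil then y else 1) * weight y b := fun a b => by
      simp only [weight, horCount, hillCount]
      by_cases hb : horCount b = 0 <;> by_cases ha : a = nil <;> simp [ha, hb, pow_add]
    simp only [h1, h2]
    simp [coeff_one]

theorem genA_relation : 3 * (genA 0 - 1) = 2 * X * (genA 3 - genA 0) := by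
  have hR := genR_eq
  have h0 := genA_eq 0
  have h3 := genA_eq 3
  have c3 : (C (3 : ℤ) : PowerSeries ℤ) = 3 := map_ofNat _ 3
  rw [map_zero] at h0
  rw [c3] at h3
  generalize genR = R at *
  generalize genA 0 = A at *
  generalize genA 3 = B at *
  have e1 : A * (1 - X * (R - 1)) - 1 = 0 := by linear_combination h0
  have e2 : B * (1 - X * (R - 1) - 3 * X) - 1 = 0 := by linear_combination h3
  have e3 : (R - 1) * (1 - X * (R - 1) - 3 * X) - 2 * X = 0 := by linear_combination hR
  linear_combination 3 * e1 - 3 * X * (R - 1) * A * e2 + 3 * X * A * B * e3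
    - 2 * X * (-B * e1 + A * e2)

theorem coeff_genA (y : ℤ) (n : ℕ) :
    coeff n (genA y) = ∑ k ∈ Finset.range (n + 1), y ^ k * (s n k : ℤ) := by
  simp only [genA, coeff_mk, weight, s_eq_card]
  rw [← Finset.sum_filter, ← Finset.sum_fiberwise_of_maps_to (g := hillCount)
    (t := Finset.range (n + 1))]
  · refine Finset.sum_congr rfl fun k _ => ?_
    rw [Finset.filter_filter, Finset.sum_congr rfl (g := fun _ => y ^ k)]
    · simp [mul_comm]
    · intro t ht
      rw [(Finset.mem_filter.1 ht).2.2]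
  · intro t ht
    have h := (mem_trees t n).1 (Finset.mem_filter.1 ht).1
    have := hillCount_le_size t
    exact Finset.mem_range.2 (by omega)

end STree

/-- For every integer `n ≥ 2`, `s(n,0) = Σ_{j=1}^{n-1} 2⬝3^{j-1} ⬝ s(n-1,j)`. -/
theorem stmt2 (n : ℕ) (hn : 2 ≤ n) :
    s n 0 = ∑ j ∈ Finset.Ico 1 n, 2 * 3 ^ (j - 1) * s (n - 1) j := by
  obtain ⟨m, rfl⟩ : ∃ m, n = m + 1 := ⟨n - 1, by omega⟩
  have h0 : ∀ n, PowerSeries.coeff n (STree.genA 0) = s n 0 := fun n => by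
    simp [STree.coeff_genA, Finset.sum_range_succ']
  have h := congrArg (PowerSeries.coeff (m + 1)) STree.genA_relation
  rw [show (3 : PowerSeries ℤ) = PowerSeries.C 3 from (map_ofNat _ 3).symm,
    show (2 : PowerSeries ℤ) = PowerSeries.C 2 from (map_ofNat _ 2).symm, mul_assoc,
    PowerSeries.coeff_C_mul, PowerSeries.coeff_C_mul, PowerSeries.coeff_succ_X_mul, map_sub,
    map_sub, h0, h0, STree.coeff_genA, Finset.sum_range_succ'] at h
  simp [PowerSeries.coeff_one] at h
  rw [Finset.sum_Ico_eq_sum_range]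
  zify
  have h' : (3 : ℤ) * s (m + 1) 0 =
      3 * ∑ k ∈ Finset.range m, 2 * 3 ^ k * (s m (k + 1) : ℤ) := by
    rw [h, Finset.mul_sum, Finset.mul_sum]
    exact Finset.sum_congr rfl fun k _ => by ring
  simpa [add_comm] using h'
end

section
/- For all integers 0 ≤ k ≤ n, s(n,k) = Σ Π_{i=1}^{k+1} s(n_i,0), where the sum is over all (k+1)-tuples (n_1,...,n_{k+1}) of nonnegative integers with n_1 + ... + n_{k+1} = n − k. (Equivalently, the triangle [s(n,k)] is a Riordan array of Bell type: every little Schröder path with k hills decomposes uniquely as p_1 UD p_2 UD ... UD p_{k+1} with each p_i a hill-free little Schröder path.) -/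
/-- A word ends at height `0`. -/
def EndsAtZero (w : List SStep) : Prop := w.count SStep.U = w.count SStep.D

/-- No `UD` straddles the cut at height `0`: a final `U` starting at height `0`
would leave `p` at height `1`. -/
lemma hills_append {p : List SStep} (hp : EndsAtZero p) (q : List SStep) :
    hills (p ++ q) = hills p + hills q := by
  unfold EndsAtZero at hp
  simp only [hills, Finset.card_filter, List.length_append, Finset.sum_range_add]
  congr 1
  · refine Finset.sum_congr rfl fun i hi => ?_
    have hi : i < p.length := by simpa using hi
    rw [List.getElem?_append_left hi, List.take_append_of_le_length hi.le]
    rcases Nat.lt_or_ge (i + 1) p.length with h | h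
    · rw [List.getElem?_append_left h]
    · have hlen : i + 1 = p.length := by omega
      have hsplit : p = p.take i ++ [p[i]] := by
        rw [List.take_concat_get', hlen, List.take_length]
      have key : ¬ (p[i]? = some SStep.U ∧
          (p.take i).count SStep.U = (p.take i).count SStep.D) := by
        rintro ⟨h1, h2⟩
        rw [List.getElem?_eq_getElem hi, Option.some_inj] at h1
        rw [hsplit, h1, List.count_append, List.count_append, h2] at hp
        simp at hp
      rw [if_neg (fun h => key ⟨h.1, h.2.2⟩), if_neg (fun h => key ⟨h.1, h.2.2⟩)]
  · refine Finset.sum_congr rfl fun i _ => ?_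
    rw [List.getElem?_append_right (by omega), List.getElem?_append_right (by omega),
      List.take_length_add_append]
    simp [hp, List.count_append, Nat.add_assoc]

lemma h0_append {p : List SStep} (hp : EndsAtZero p) (q : List SStep) :
    h0 (p ++ q) = h0 p + h0 q := by
  unfold EndsAtZero at hp
  simp only [h0, Finset.card_filter, List.length_append, Finset.sum_range_add]
  congr 1
  · refine Finset.sum_congr rfl fun i hi => ?_
    have hi : i < p.length := by simpa using hi
    rw [List.getElem?_append_left hi, List.take_append_of_le_length hi.le]
  · refine Finset.sum_congr rfl fun i _ => ?_
    rw [List.getElem?_append_right (by omega), List.take_length_add_append]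
    simp [hp, List.count_append]

lemma endsAtZero_UD : EndsAtZero [SStep.U, SStep.D] := by
  unfold EndsAtZero
  decide

lemma hills_UD_cons (q : List SStep) : hills (SStep.U :: SStep.D :: q) = 1 + hills q :=
  hills_append endsAtZero_UD q

lemma h0_UD_cons (q : List SStep) : h0 (SStep.U :: SStep.D :: q) = h0 q := by
  have h := h0_append endsAtZero_UD q
  rwa [show h0 [SStep.U, SStep.D] = 0 by decide, Nat.zero_add] at h

lemma isSchroeder_UD : IsSchroeder 1 [SStep.U, SStep.D] := by
  refine ⟨by decide, by decide, fun i => ?_⟩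
  rcases i with _ | _ | i <;> simp

lemma IsSchroeder.append {a b : ℕ} {p q : List SStep} (hp : IsSchroeder a p)
    (hq : IsSchroeder b q) : IsSchroeder (a + b) (p ++ q) := by
  obtain ⟨hp1, hp2, hp3⟩ := hp
  obtain ⟨hq1, hq2, hq3⟩ := hq
  refine ⟨by simp only [List.count_append]; omega, by simp only [List.count_append]; omega,
    fun i => ?_⟩
  have h1 := hp3 i
  have h2 := hq3 (i - p.length)
  simp only [List.take_append, List.count_append]
  omega

/-- A prefix, ending at height `0`, of a Schröder path is a Schröder path. -/
lemma IsSchroeder.of_append_left {n : ℕ} {p q : List SStep} (h : IsSchroeder n (p ++ q))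
    (hp : EndsAtZero p) : IsSchroeder (p.count SStep.U + p.count SStep.H) p := by
  refine ⟨hp, rfl, fun i => ?_⟩
  have h1 := h.2.2 (min i p.length)
  rwa [List.take_append_of_le_length (by omega), ← List.take_eq_take_min] at h1

/-- What follows a prefix, ending at height `0`, of a Schröder path is a Schröder path. -/
lemma IsSchroeder.of_append_right {n : ℕ} {p q : List SStep} (h : IsSchroeder n (p ++ q))
    (hp : EndsAtZero p) : IsSchroeder (q.count SStep.U + q.count SStep.H) q := by
  unfold EndsAtZero at hp
  refine ⟨?_, rfl, fun i => ?_⟩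
  · have h1 := h.1
    simp only [List.count_append] at h1
    omega
  · have h1 := h.2.2 (p.length + i)
    rw [List.take_length_add_append] at h1
    simp only [List.count_append] at h1
    omega

/-- Little Schröder paths of semilength `n` with `k` hills, the words counted by `s n k`. -/
abbrev LittlePath (n k : ℕ) : Type := {w : List SStep // IsLittle n w ∧ hills w = k}

lemma length_eq_counts (w : List SStep) :
    w.length = w.count SStep.U + w.count SStep.D + w.count SStep.H := by
  induction w with
  | nil => rfl
  | cons x w ih => cases x <;> simp [ih] <;> omega

instance (n k : ℕ) : Finite (LittlePath n k) := by
  have : Finite SStep := by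
    refine Set.finite_univ_iff.mp (Set.Finite.subset
      (Set.toFinite {SStep.U, SStep.D, SStep.H}) fun x _ => ?_)
    cases x <;> simp
  refine Set.Finite.subset (List.finite_length_le SStep (2 * n)) ?_
  rintro w ⟨⟨⟨h1, h2, -⟩, -⟩, -⟩
  have := length_eq_counts w
  simp only [Set.mem_ofPred_eq]
  omega

lemma isLittle_glue {a b k : ℕ} {p q : List SStep} (hp : IsLittle a p ∧ hills p = 0)
    (hq : IsLittle b q ∧ hills q = k) :
    IsLittle (a + b + 1) (p ++ SStep.U :: SStep.D :: q) ∧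
      hills (p ++ SStep.U :: SStep.D :: q) = k + 1 := by
  have hb : EndsAtZero p := hp.1.1.1
  refine ⟨⟨?_, ?_⟩, ?_⟩
  · have h := hp.1.1.append (isSchroeder_UD.append hq.1.1)
    rwa [show a + (1 + b) = a + b + 1 by omega] at h
  · rw [h0_append hb, h0_UD_cons, hp.1.2, hq.1.2]
  · rw [hills_append hb, hills_UD_cons, hp.2, hq.2]
    omega

/-- Uniqueness of the factorization at the first hill, for prefixes `p` and `p ++ c`: a nonempty
`c` would begin with a hill. -/
lemma glue_inj_aux {p c q q' : List SStep} (hp : EndsAtZero p) (hpc : EndsAtZero (p ++ c))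
    (h0' : hills (p ++ c) = 0)
    (h : SStep.U :: SStep.D :: q = c ++ SStep.U :: SStep.D :: q') : c = [] ∧ q = q' := by
  rw [hills_append hp] at h0'
  unfold EndsAtZero at hp hpc
  simp only [List.count_append] at hpc
  rcases c with _ | ⟨x, _ | ⟨y, c⟩⟩
  · simpa using h
  · simp at h
  · simp only [List.cons_append, List.cons.injEq] at h
    obtain ⟨rfl, rfl, -⟩ := h
    rw [hills_UD_cons] at h0'
    omega

lemma glue_inj {p p' q q' : List SStep} (hp : EndsAtZero p) (hp' : EndsAtZero p')
    (h0p : hills p = 0) (h0p' : hills p' = 0)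
    (h : p ++ SStep.U :: SStep.D :: q = p' ++ SStep.U :: SStep.D :: q') : p = p' ∧ q = q' := by
  rcases List.append_eq_append_iff.mp h with ⟨c, rfl, hc⟩ | ⟨c, rfl, hc⟩
  · obtain ⟨rfl, rfl⟩ := glue_inj_aux hp hp' h0p' hc
    simp
  · obtain ⟨rfl, rfl⟩ := glue_inj_aux hp' hp h0p hc
    simp

/-- A word with at least one hill can be cut at its first hill. -/
lemma exists_first_hill {w : List SStep} (hw : hills w ≠ 0) :
    ∃ p q, w = p ++ SStep.U :: SStep.D :: q ∧ EndsAtZero p ∧ hills p = 0 := by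
  classical
  have hex : ∃ i, w[i]? = some SStep.U ∧ w[i+1]? = some SStep.D ∧
      (w.take i).count SStep.U = (w.take i).count SStep.D := by
    obtain ⟨i, hi⟩ := Finset.card_ne_zero.mp hw
    exact ⟨i, (Finset.mem_filter.mp hi).2⟩
  obtain ⟨h1, h2, h3⟩ := Nat.find_spec hex
  have hmin : ∀ j < Nat.find hex, _ := fun j hj => Nat.find_min hex hj
  generalize Nat.find hex = i at h1 h2 h3 hmin
  obtain ⟨hi, hU⟩ := List.getElem?_eq_some_iff.mp h1
  obtain ⟨hi', hD⟩ := List.getElem?_eq_some_iff.mp h2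
  refine ⟨w.take i, w.drop (i + 2), ?_, h3, ?_⟩
  · rw [← hU, ← hD, ← List.drop_eq_getElem_cons hi', ← List.drop_eq_getElem_cons hi,
      List.take_append_drop]
  · rw [hills, Finset.card_eq_zero, Finset.filter_eq_empty_iff]
    rintro j hj ⟨g1, g2, g3⟩
    have hji : j < i := by
      have := Finset.mem_range.mp hj
      rw [List.length_take] at this
      omega
    have hji' : j + 1 < i := by
      obtain ⟨hlt, -⟩ := List.getElem?_eq_some_iff.mp g2
      rw [List.length_take] at hlt
      omega
    rw [List.getElem?_take_of_lt hji] at g1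
    rw [List.getElem?_take_of_lt hji'] at g2
    rw [List.take_take, min_eq_left hji.le] at g3
    exact hmin j hji ⟨g1, g2, g3⟩

/-- A path with a hill is counted through its factorization at the first hill. -/
lemma s_succ_succ (n k : ℕ) :
    s (n + 1) (k + 1) = ∑ ab ∈ Finset.HasAntidiagonal.antidiagonal n, s ab.1 0 * s ab.2 k := by
  let f : (Σ ab : Finset.HasAntidiagonal.antidiagonal n, LittlePath ab.1.1 0 × LittlePath ab.1.2 k) →
      LittlePath (n + 1) (k + 1) := fun x =>
    ⟨x.2.1.1 ++ SStep.U :: SStep.D :: x.2.2.1, by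
      have h := isLittle_glue x.2.1.2 x.2.2.2
      rwa [Finset.HasAntidiagonal.mem_antidiagonal.mp x.1.2] at h⟩
  have hf : Function.Bijective f := by
    constructor
    · rintro ⟨⟨⟨a, b⟩, hab⟩, ⟨p, hp⟩, ⟨q, hq⟩⟩ ⟨⟨⟨a', b'⟩, hab'⟩, ⟨p', hp'⟩, ⟨q', hq'⟩⟩ h
      obtain ⟨rfl, rfl⟩ := glue_inj hp.1.1.1 hp'.1.1.1 hp.2 hp'.2 (congrArg Subtype.val h)
      -- The semilengths are determined by the words.
      obtain rfl : a = a' := hp.1.1.2.1.symm.trans hp'.1.1.2.1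
      obtain rfl : b = b' := hq.1.1.2.1.symm.trans hq'.1.1.2.1
      rfl
    · rintro ⟨w, ⟨hS, h0w⟩, hk⟩
      obtain ⟨p, q, rfl, hb, hp0⟩ := exists_first_hill (w := w) (by omega)
      have hp := hS.of_append_left hb
      have hq := (hS.of_append_right hb).of_append_right (p := [SStep.U, SStep.D]) (q := q)
        endsAtZero_UD
      rw [h0_append hb, h0_UD_cons] at h0w
      rw [hills_append hb, hills_UD_cons] at hk
      have hn := hS.2.1
      simp only [List.count_append] at hn
      refine ⟨⟨⟨(p.count SStep.U + p.count SStep.H, q.count SStep.U + q.count SStep.H), ?_⟩,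
        ⟨p, ⟨hp, by omega⟩, hp0⟩, ⟨q, ⟨hq, by omega⟩, by omega⟩⟩, rfl⟩
      rw [Finset.HasAntidiagonal.mem_antidiagonal]
      simp at hn
      omega
  have h := Nat.card_congr (Equiv.ofBijective f hf)
  rw [Nat.card_sigma] at h
  simp only [Nat.card_prod] at h
  rw [s, ← h]
  exact Finset.sum_coe_sort (Finset.HasAntidiagonal.antidiagonal n) (fun ab => s ab.1 0 * s ab.2 k)

lemma s_eq_zero_of_lt {n k : ℕ} (h : n < k) : s n k = 0 := by
  induction k generalizing n with
  | zero => omega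
  | succ k ih =>
    rcases n with _ | n
    · have : IsEmpty (LittlePath 0 (k + 1)) := by
        constructor
        rintro ⟨w, ⟨⟨h1, h2, -⟩, -⟩, hk⟩
        have hlen := length_eq_counts w
        obtain rfl : w = [] := List.length_eq_zero_iff.mp (by omega)
        simp [hills] at hk
      exact Nat.card_of_isEmpty
    · rw [s_succ_succ]
      refine Finset.sum_eq_zero fun ab hab => ?_
      rw [Finset.HasAntidiagonal.mem_antidiagonal] at hab
      rw [ih (by omega), Nat.mul_zero]

lemma sum_antidiagonalTuple_succ (g : ℕ → ℕ) (k n : ℕ) :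
    ∑ t ∈ Finset.Nat.antidiagonalTuple (k + 1) n, ∏ i, g (t i) =
      ∑ ab ∈ Finset.HasAntidiagonal.antidiagonal n,
        g ab.1 * ∑ t ∈ Finset.Nat.antidiagonalTuple k ab.2, ∏ i, g (t i) := by
  simp only [Finset.mul_sum]
  rw [Finset.sum_sigma']
  refine Finset.sum_bij' (fun t _ => ⟨(t 0, ∑ i, Fin.tail t i), Fin.tail t⟩)
    (fun x _ => Fin.cons x.1.1 x.2) ?_ ?_ ?_ ?_ ?_
  · intro t ht
    rw [Finset.Nat.mem_antidiagonalTuple, Fin.sum_univ_succ] at ht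
    simpa [Finset.Nat.mem_antidiagonalTuple, Fin.tail] using ht
  · rintro ⟨⟨a, b⟩, t⟩ h
    simp only [Finset.mem_sigma, Finset.HasAntidiagonal.mem_antidiagonal,
      Finset.Nat.mem_antidiagonalTuple] at h
    simp [Finset.Nat.mem_antidiagonalTuple, Fin.sum_univ_succ, h]
  · intro t _
    simp
  · rintro ⟨⟨a, b⟩, t⟩ h
    simp only [Finset.mem_sigma, Finset.HasAntidiagonal.mem_antidiagonal,
      Finset.Nat.mem_antidiagonalTuple] at h
    simp [h]
  · intro t _
    simp [Fin.prod_univ_succ, Fin.tail]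

/-- For all `0 ≤ k ≤ n`, `s(n,k)` is the sum, over all `(k+1)`-tuples of
nonnegative integers summing to `n - k`, of the products `Π_i s(n_i, 0)`. -/
theorem stmt6 (n k : ℕ) (hkn : k ≤ n) :
    s n k = ∑ t ∈ Finset.Nat.antidiagonalTuple (k + 1) (n - k), ∏ i, s (t i) 0 := by
  obtain ⟨m, rfl⟩ := Nat.exists_eq_add_of_le hkn
  rw [Nat.add_sub_cancel_left]
  clear hkn
  induction k generalizing m with
  | zero => simp [Finset.Nat.antidiagonalTuple_one]
  | succ k ih =>
    rw [sum_antidiagonalTuple_succ (fun j => s j 0), Nat.add_right_comm, s_succ_succ]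
    symm
    -- Only the terms `(a, b)` with `k ≤ b` survive; these are the shifts of the pairs summing to `m`.
    refine Finset.sum_of_injOn (fun ab => (ab.1, k + ab.2)) ?_ ?_ ?_ ?_
    · rintro ⟨a, b⟩ - ⟨a', b'⟩ - h
      simpa using h
    · rintro ⟨a, b⟩ h
      simp only [Finset.mem_coe, Finset.HasAntidiagonal.mem_antidiagonal] at h ⊢
      omega
    · rintro ⟨a, b⟩ h hnot
      rw [Finset.HasAntidiagonal.mem_antidiagonal] at h
      simp only at h
      rcases Nat.lt_or_ge b k with hb | hb
      · simp [s_eq_zero_of_lt hb]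
      · refine absurd ⟨(a, b - k), ?_, ?_⟩ hnot
        · simp only [Finset.mem_coe, Finset.HasAntidiagonal.mem_antidiagonal]
          omega
        · simp only [Prod.mk.injEq, true_and]
          omega
    · rintro ⟨a, b⟩ -
      rw [ih]
end

section
/- For all integers n and k with 2 ≤ k ≤ n, p(n,k) = p(n-1,k-1) + Σ_{j=k}^{n-1} 2^{j-k} · p(n-1,j). -/
/-!
Write `u` for the generating function `∑ₙ p(n,1) Xⁿ`, `T` for that of all separable permutations,
and `P k` for `∑ₙ p(n,k) Xⁿ`.

A separable permutation splits as a direct sum right after the last position whose value is at most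
the first value: a failure would exhibit the pattern `2413` (`exists_dsum_of_firstBlock`). The
first summand is then either a single point or a permutation whose last value is below its first.
Counting by this summand, and doing the same for the complement, which turns direct sums into skew
sums, gives for `k ≥ 1`

* `P k = X * P (k-1) + I * T` (`p_eq_sum_direct`), since a first summand of size one prolongs the
  initial ascending run by one and any other first summand contains it;
* `P k = J * T` (`p_eq_sum_skew`), since the initial ascending run lies in the first skew component.

Here `I` counts the separable permutations with `iar = k` whose last value is below the first, and
`J` counts the others, so `P k = I + J`. Eliminating `I` and `J` yields `(2 - T) * P k = X * P (k-1)`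
(`pSeries_step`), hence `P k = u ^ k`. As `T = ∑ₖ P k = 1 / (1 - u)`, the case `k = 1` becomes
`u * (1 - 2u) = X * (1 - u)`, that is `u = X * (1 + u / (1 - 2u))`. Multiplying by `u ^ (k-1)` gives
`u ^ k = X * (u ^ (k-1) + ∑_{j ≥ k} 2 ^ (j-k) * u ^ j)`, whose coefficient at `X ^ n` is the claim.
-/

/-- The pattern `2413` as a permutation of `Fin 4` (zero-indexed values `1,3,0,2`). -/
def pattern2413 : Equiv.Perm (Fin 4) :=
  ⟨![1, 3, 0, 2], ![2, 0, 3, 1], by decide, by decide⟩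

/-- The pattern `3142` as a permutation of `Fin 4` (zero-indexed values `2,0,3,1`). -/
def pattern3142 : Equiv.Perm (Fin 4) :=
  ⟨![2, 0, 3, 1], ![1, 3, 0, 2], by decide, by decide⟩

/-- `ContainsPat π σ` : the permutation `π` contains the pattern `σ`. -/
def ContainsPat {n m : ℕ} (π : Equiv.Perm (Fin n)) (σ : Equiv.Perm (Fin m)) : Prop :=
  ∃ f : Fin m ↪o Fin n, ∀ a b : Fin m, σ a < σ b ↔ π (f a) < π (f b)

/-- A separable permutation avoids both `2413` and `3142`. -/
def Separable {n : ℕ} (π : Equiv.Perm (Fin n)) : Prop :=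
  ¬ ContainsPat π pattern2413 ∧ ¬ ContainsPat π pattern3142

/-- `iar π` : the length of the initial ascending run of `π`, i.e. the largest
`k ≤ n` such that the first `k` values of `π` are increasing. -/
def iar {n : ℕ} (π : Equiv.Perm (Fin n)) : ℕ :=
  Nat.findGreatest (fun k => ∀ i j : Fin n, (i : ℕ) < (j : ℕ) → (j : ℕ) < k → π i < π j) n

/-- `p n k` : the number of separable permutations of `[n]` with `iar` equal to `k`. -/
noncomputable def p (n k : ℕ) : ℕ :=
  Nat.card {π : Equiv.Perm (Fin n) // Separable π ∧ iar π = k}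

/-- `compStat π` : the number of indices `k ∈ {1,…,n}` such that the first `k`
values of `π` are exactly `{1,…,k}`. -/
def compStat {n : ℕ} (π : Equiv.Perm (Fin n)) : ℕ :=
  ((Finset.Icc 1 n).filter
    (fun k => ∀ i : Fin n, (i : ℕ) < k → (π i : ℕ) < k)).card

open Finset

/-! ### Separability, initial runs, complements and direct sums -/

/-- Separability spelled out on values: no four positions carry `2413`, and none carry `3142`. -/
theorem separable_iff {n : ℕ} (π : Equiv.Perm (Fin n)) :
    Separable π ↔ ∀ i j k l : Fin n, i < j → j < k → k < l →
      ¬ (π k < π i ∧ π i < π l ∧ π l < π j) ∧ ¬ (π j < π l ∧ π l < π i ∧ π i < π k) := by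
  have key : ∀ i j k l : Fin n, i < j → j < k → k < l → StrictMono ![i, j, k, l] := by
    intro i j k l h1 h2 h3
    rw [Fin.strictMono_iff_lt_succ]
    intro t
    fin_cases t <;> simpa
  constructor
  · rintro ⟨h1, h2⟩ i j k l hij hjk hkl
    refine ⟨fun h => h1 ?_, fun h => h2 ?_⟩
    all_goals
      refine ⟨OrderEmbedding.ofStrictMono _ (key i j k l hij hjk hkl), fun a b => ?_⟩
      simp only [OrderEmbedding.coe_ofStrictMono]
      obtain ⟨h1, h2, h3⟩ := h
      fin_cases a <;> fin_cases b <;>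
        simp [pattern2413, pattern3142] <;> order
  · intro h
    refine ⟨fun ⟨f, hf⟩ => ?_, fun ⟨f, hf⟩ => ?_⟩
    all_goals
      have := h (f 0) (f 1) (f 2) (f 3) (by simp) (by simp) (by simp)
    · exact this.1 ⟨(hf 2 0).1 (by decide), (hf 0 3).1 (by decide), (hf 3 1).1 (by decide)⟩
    · exact this.2 ⟨(hf 1 3).1 (by decide), (hf 3 0).1 (by decide), (hf 0 2).1 (by decide)⟩

/-- The first `k` values of `π` are increasing (the predicate maximised by `iar`). -/
def Inc {n : ℕ} (π : Equiv.Perm (Fin n)) (k : ℕ) : Prop :=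
  ∀ i j : Fin n, (i : ℕ) < (j : ℕ) → (j : ℕ) < k → π i < π j

theorem le_iar_iff {n : ℕ} (π : Equiv.Perm (Fin n)) (k : ℕ) :
    k ≤ iar π ↔ k ≤ n ∧ Inc π k := by
  have h0 : Inc π (iar π) := Nat.findGreatest_spec (m := 0) (P := fun k => ∀ i j : Fin n,
    (i : ℕ) < (j : ℕ) → (j : ℕ) < k → π i < π j) (Nat.zero_le n) (by simp)
  constructor
  · exact fun h => ⟨h.trans (Nat.findGreatest_le _), fun i j hij hj => h0 i j hij (by omega)⟩
  · exact fun h => Nat.le_findGreatest h.1 h.2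

/-- The complement of `π`, with values `n - 1 - π i`. It exchanges `2413` with `3142`, ascents with
descents, and skew sums with direct sums. -/
def permCompl {n : ℕ} (π : Equiv.Perm (Fin n)) : Equiv.Perm (Fin n) := π.trans Fin.revPerm

theorem permCompl_lt {n : ℕ} (π : Equiv.Perm (Fin n)) (i j : Fin n) :
    permCompl π i < permCompl π j ↔ π j < π i := by simp [permCompl]

theorem permCompl_permCompl {n : ℕ} (π : Equiv.Perm (Fin n)) : permCompl (permCompl π) = π := by
  ext; simp [permCompl]

theorem separable_permCompl {n : ℕ} (π : Equiv.Perm (Fin n)) :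
    Separable (permCompl π) ↔ Separable π := by
  simp only [separable_iff, permCompl_lt]
  refine forall_congr' fun i => forall_congr' fun j => forall_congr' fun k =>
    forall_congr' fun l => ?_
  tauto

/-- The direct sum `α ⊕ β`: `α` on the first `a` positions and values, `β` shifted by `a` on the
remaining ones. -/
def dsum {a b : ℕ} (α : Equiv.Perm (Fin a)) (β : Equiv.Perm (Fin b)) :
    Equiv.Perm (Fin (a + b)) :=
  finSumFinEquiv.permCongr (Equiv.Perm.sumCongr α β)

theorem dsum_left {a b : ℕ} (α : Equiv.Perm (Fin a)) (β : Equiv.Perm (Fin b)) (i : Fin a) :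
    dsum α β (Fin.castAdd b i) = Fin.castAdd b (α i) := by
  simp [dsum, Equiv.permCongr_apply]

theorem dsum_right {a b : ℕ} (α : Equiv.Perm (Fin a)) (β : Equiv.Perm (Fin b)) (i : Fin b) :
    dsum α β (Fin.natAdd a i) = Fin.natAdd a (β i) := by
  simp [dsum, Equiv.permCongr_apply]

theorem dsum_left_lt_left {a b : ℕ} (α : Equiv.Perm (Fin a)) (β : Equiv.Perm (Fin b))
    (i j : Fin a) : dsum α β (Fin.castAdd b i) < dsum α β (Fin.castAdd b j) ↔ α i < α j := by
  rw [dsum_left, dsum_left]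
  exact Iff.rfl

theorem dsum_right_lt_right {a b : ℕ} (α : Equiv.Perm (Fin a)) (β : Equiv.Perm (Fin b))
    (i j : Fin b) : dsum α β (Fin.natAdd a i) < dsum α β (Fin.natAdd a j) ↔ β i < β j := by
  rw [dsum_right, dsum_right]
  exact Nat.add_lt_add_iff_left

theorem dsum_left_lt_right {a b : ℕ} (α : Equiv.Perm (Fin a)) (β : Equiv.Perm (Fin b))
    (i : Fin a) (j : Fin b) : dsum α β (Fin.castAdd b i) < dsum α β (Fin.natAdd a j) := by
  rw [dsum_left, dsum_right, Fin.lt_def, Fin.val_castAdd, Fin.val_natAdd]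
  omega

theorem dsum_injective {a b : ℕ} : Function.Injective
    (fun x : Equiv.Perm (Fin a) × Equiv.Perm (Fin b) => dsum x.1 x.2) := by
  rintro ⟨α, β⟩ ⟨α₂, β₂⟩ h
  have h₂ : Equiv.Perm.sumCongrHom _ _ (α, β) = Equiv.Perm.sumCongrHom _ _ (α₂, β₂) :=
    finSumFinEquiv.permCongr.injective h
  exact Equiv.Perm.sumCongrHom_injective h₂

theorem exists_dsum {a b : ℕ} (π : Equiv.Perm (Fin (a + b)))
    (h : ∀ i : Fin (a + b), i.val < a → (π i).val < a) : ∃ α β, dsum α β = π := by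
  obtain ⟨⟨α, β⟩, hx⟩ := Equiv.Perm.mem_sumCongrHom_range_of_perm_mapsTo_inl
    (σ := finSumFinEquiv.symm.permCongr π) (by
      rintro _ ⟨x, rfl⟩
      have h1 := h (Fin.castAdd b x) (by simp)
      refine ⟨⟨_, h1⟩, ?_⟩
      apply finSumFinEquiv.injective
      simp [Equiv.permCongr_apply])
  refine ⟨α, β, ?_⟩
  have h2 : Equiv.Perm.sumCongr α β = finSumFinEquiv.symm.permCongr π := hx
  rw [dsum, h2]
  ext; simp [Equiv.permCongr_apply]

theorem separable_dsum {a b : ℕ} (α : Equiv.Perm (Fin a)) (β : Equiv.Perm (Fin b)) :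
    Separable (dsum α β) ↔ Separable α ∧ Separable β := by
  simp only [separable_iff]
  constructor
  · intro h
    refine ⟨fun i j k l h1 h2 h3 => ?_, fun i j k l h1 h2 h3 => ?_⟩
    · simpa only [dsum_left_lt_left] using h (Fin.castAdd b i) (Fin.castAdd b j) (Fin.castAdd b k)
        (Fin.castAdd b l) (by simpa) (by simpa) (by simpa)
    · simpa only [dsum_right_lt_right] using h (Fin.natAdd a i) (Fin.natAdd a j) (Fin.natAdd a k)
        (Fin.natAdd a l) (by simpa) (by simpa) (by simpa)
  · rintro ⟨hα, hβ⟩ i j k l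
    induction i using Fin.addCases <;> induction j using Fin.addCases <;>
    induction k using Fin.addCases <;> induction l using Fin.addCases <;>
    simp only [dsum_left, dsum_right, Fin.lt_def, Fin.val_castAdd, Fin.val_natAdd] <;>
    intro h1 h2 h3
    · exact hα _ _ _ _ h1 h2 h3
    on_goal 15 => simpa using hβ _ _ _ _ (by simpa using h1) (by simpa using h2) (by simpa using h3)
    all_goals omega

/-- If every value at the first `c` positions lies below every value at the later ones, then the
first `c` positions take exactly the values below `c`. Otherwise the `n - c` later values would all
have to exceed some value `≥ c`, which leaves too little room. -/
theorem block_mapsTo {n c : ℕ} (hc : c ≤ n) (π : Equiv.Perm (Fin n))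
    (h : ∀ i j : Fin n, i.val < c → c ≤ j.val → π i < π j) (i : Fin n) (hi : i.val < c) :
    (π i).val < c := by
  by_contra hcon
  have h1 : ((univ.filter fun j : Fin n => c ≤ j.val).image fun j => (π j).val) ⊆ Ioo (π i).val n := by
    intro v hv
    simp only [mem_image, mem_filter, mem_univ, true_and] at hv
    obtain ⟨j, hj, rfl⟩ := hv
    simpa using h i j hi hj
  have h2 := card_le_card h1
  rw [card_image_of_injective _ (fun x y hxy => π.injective (Fin.ext hxy)), Nat.card_Ioo] at h2
  have h3 : (univ.filter fun j : Fin n => c ≤ j.val).card = n - c := by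
    have : (univ.filter fun j : Fin n => c ≤ j.val).card = (Ico c n).card := by
      apply card_bij (fun j _ => j.val)
      · simp
      · intro x _ y _ h; exact Fin.ext h
      · intro b hb
        simp only [mem_Ico] at hb
        exact ⟨⟨b, hb.2⟩, by simpa using hb.1, rfl⟩
    simpa using this
  have := (π i).isLt
  omega

/-! ### The first block of a separable permutation -/

/-- The last value of `π` is smaller than the first one. False for `n ≤ 1`. For separable `π` of
size at least two this says that `π` is not a proper direct sum. -/
def StrictEnds {n : ℕ} (π : Equiv.Perm (Fin n)) : Prop :=
  ∃ i z : Fin n, z.val = 0 ∧ i.val + 1 = n ∧ π i < π z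

/-- The last value of `π` is at most the first one; since `π` is injective, this is `n = 1` or
`StrictEnds π`, and it fails for `n = 0`. -/
def WeakEnds {n : ℕ} (π : Equiv.Perm (Fin n)) : Prop :=
  ∃ i z : Fin n, z.val = 0 ∧ i.val + 1 = n ∧ π i ≤ π z

open Classical in
/-- One plus the last position whose value is at most the first value (`0` if `n = 0`). For separable
`π` this is the size of the first direct-sum component, see `exists_dsum_of_firstBlock`. -/
noncomputable def firstBlock {n : ℕ} (π : Equiv.Perm (Fin n)) : ℕ :=
  Nat.findGreatest (fun a => ∃ i z : Fin n, z.val = 0 ∧ i.val + 1 = a ∧ π i ≤ π z) n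

theorem firstBlock_le {n : ℕ} (π : Equiv.Perm (Fin n)) : firstBlock π ≤ n :=
  Nat.findGreatest_le _

theorem firstBlock_pos {n : ℕ} (hn : 0 < n) (π : Equiv.Perm (Fin n)) : 0 < firstBlock π :=
  Nat.le_findGreatest hn ⟨⟨0, hn⟩, ⟨0, hn⟩, rfl, rfl, le_rfl⟩

theorem firstBlock_dsum {a b : ℕ} (α : Equiv.Perm (Fin a)) (β : Equiv.Perm (Fin b))
    (h : WeakEnds α) : firstBlock (dsum α β) = a := by
  obtain ⟨i, z, hz, hi, hle⟩ := h
  refine (Nat.findGreatest_eq_iff).2 ⟨by omega, fun _ => ⟨Fin.castAdd b i, Fin.castAdd b z, ?_⟩, ?_⟩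
  · exact ⟨hz, hi, not_lt.1 fun h => absurd ((dsum_left_lt_left α β z i).1 h) (not_lt.2 hle)⟩
  · rintro c hc - ⟨j, w, hw, hj, hlt⟩
    induction j using Fin.addCases with
    | left j => simp at hj; omega
    | right j =>
      induction w using Fin.addCases with
      | left w => exact absurd (dsum_left_lt_right α β w j) (not_lt.2 hlt)
      | right w => simp at hw; omega

/-- A separable permutation splits as a direct sum right after its first block. Let `z` be the first
position and `m` the last one in the block, and suppose that `i` inside the block and `j` after it
satisfy `π j < π i`. Then `z < i < m < j` and `π m < π z < π j < π i`, an occurrence of `2413`. -/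
theorem exists_dsum_of_firstBlock {a b : ℕ} (ha : 0 < a) (π : Equiv.Perm (Fin (a + b)))
    (hs : Separable π) (hf : firstBlock π = a) : ∃ α β, dsum α β = π ∧ WeakEnds α := by
  obtain ⟨-, h1, h2⟩ := (Nat.findGreatest_eq_iff).1 hf
  obtain ⟨m, z, hz, hm, hle⟩ := h1 (by omega)
  have hgt : ∀ j : Fin (a + b), a ≤ j.val → π z < π j := by
    intro j hj
    by_contra hcon
    exact h2 (n := j.val + 1) (by omega) (by omega) ⟨j, z, hz, rfl, not_lt.1 hcon⟩
  obtain ⟨α, β, rfl⟩ := exists_dsum π (block_mapsTo (by omega) π (by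
    intro i j hi hj
    by_contra hcon
    have hij : i ≠ j := by rintro rfl; omega
    have hji : π j < π i := lt_of_le_of_ne (not_lt.1 hcon) (fun h => hij (π.injective h.symm))
    have hzj := hgt j hj
    have hiz : i ≠ z := by rintro rfl; order
    have him : i ≠ m := by rintro rfl; order
    have hiz₂ := Fin.val_ne_of_ne hiz
    have him₂ := Fin.val_ne_of_ne him
    have hmz : π m < π z := lt_of_le_of_ne hle fun h => by
      have := congrArg Fin.val (π.injective h)
      omega
    exact ((separable_iff π).1 hs z i m j (by rw [Fin.lt_def]; omega) (by rw [Fin.lt_def]; omega)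
      (by rw [Fin.lt_def]; omega)).1 ⟨hmz, hzj, hji⟩))
  refine ⟨α, β, rfl, ⟨⟨m, by omega⟩, ⟨z, by omega⟩, hz, hm, ?_⟩⟩
  have e1 : m = Fin.castAdd b ⟨m, by omega⟩ := rfl
  have e2 : z = Fin.castAdd b ⟨z, by omega⟩ := rfl
  rw [e1, e2, dsum_left, dsum_left] at hle
  exact hle

/-! ### Initial runs of direct sums -/

/-- When `α` ends below its first value, its initial run stops inside `α`. -/
theorem iar_dsum_of_strictEnds {a b : ℕ} (α : Equiv.Perm (Fin a)) (β : Equiv.Perm (Fin b))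
    (h : StrictEnds α) : iar (dsum α β) = iar α := by
  obtain ⟨i, z, hz, hi, hlt⟩ := h
  refine eq_of_forall_le_iff fun c => ?_
  rw [le_iar_iff, le_iar_iff]
  have hzi : z.val < i.val := by
    have : z.val ≠ i.val := fun h => by rw [Fin.ext h] at hlt; exact lt_irrefl _ hlt
    omega
  constructor
  · rintro ⟨-, h2⟩
    refine ⟨?_, fun x y hxy hy => ?_⟩
    · by_contra hc
      have := h2 (Fin.castAdd b z) (Fin.castAdd b i) (by simpa) (by simp; omega)
      rw [dsum_left_lt_left] at this
      order
    · have := h2 (Fin.castAdd b x) (Fin.castAdd b y) (by simpa) (by simpa)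
      rwa [dsum_left_lt_left] at this
  · rintro ⟨h1, h2⟩
    refine ⟨by omega, fun x y hxy hy => ?_⟩
    have := h2 ⟨x, by omega⟩ ⟨y, by omega⟩ hxy hy
    exact (dsum_left_lt_left α β ⟨x, by omega⟩ ⟨y, by omega⟩).2 this

/-- The initial descending run of `α ⊕ β` is that of `α`, because `β` lies above `α`. -/
theorem iar_permCompl_dsum {a b : ℕ} (ha : 0 < a) (α : Equiv.Perm (Fin a))
    (β : Equiv.Perm (Fin b)) : iar (permCompl (dsum α β)) = iar (permCompl α) := by
  refine eq_of_forall_le_iff fun c => ?_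
  rw [le_iar_iff, le_iar_iff]
  simp only [Inc, permCompl_lt]
  constructor
  · rintro ⟨h1, h2⟩
    refine ⟨?_, fun x y hxy hy => ?_⟩
    · by_contra hc
      have := h2 (Fin.castAdd b ⟨0, ha⟩) (Fin.natAdd a ⟨0, by omega⟩) (by simpa) (by simp; omega)
      exact lt_asymm this (dsum_left_lt_right α β _ _)
    · have := h2 (Fin.castAdd b x) (Fin.castAdd b y) (by simpa) (by simpa)
      rwa [dsum_left_lt_left] at this
  · rintro ⟨h1, h2⟩
    refine ⟨by omega, fun x y hxy hy => ?_⟩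
    have := h2 ⟨x, by omega⟩ ⟨y, by omega⟩ hxy hy
    exact (dsum_left_lt_left α β ⟨y, by omega⟩ ⟨x, by omega⟩).2 this

theorem iar_one_dsum {b : ℕ} (α : Equiv.Perm (Fin 1)) (β : Equiv.Perm (Fin b)) :
    iar (dsum α β) = iar β + 1 := by
  refine eq_of_forall_le_iff fun c => ?_
  cases c with
  | zero => simp
  | succ c =>
    rw [Nat.add_le_add_iff_right, le_iar_iff, le_iar_iff]
    constructor
    · rintro ⟨h1, h2⟩
      refine ⟨by omega, fun x y hxy hy => ?_⟩
      have := h2 (Fin.natAdd 1 x) (Fin.natAdd 1 y) (by simpa) (by simp; omega)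
      rwa [dsum_right_lt_right] at this
    · rintro ⟨h1, h2⟩
      refine ⟨by omega, fun x y hxy hy => ?_⟩
      induction y using Fin.addCases with
      | left y => simp at hxy
      | right y =>
        induction x using Fin.addCases with
        | left x => exact dsum_left_lt_right α β x y
        | right x =>
          have := h2 x y (by simpa using hxy) (by simp at hy; omega)
          rwa [dsum_right_lt_right]

theorem iar_pos {n : ℕ} (hn : 0 < n) (π : Equiv.Perm (Fin n)) : 0 < iar π :=
  (le_iar_iff π 1).2 ⟨hn, fun i j hij hj => by omega⟩

theorem iar_le {n : ℕ} (π : Equiv.Perm (Fin n)) : iar π ≤ n := ((le_iar_iff π _).1 le_rfl).1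

/-! ### Counting -/

/-- The number of separable permutations of size `n`. -/
noncomputable def sepCount (n : ℕ) : ℕ := Nat.card {π : Equiv.Perm (Fin n) // Separable π}

/-- The number of separable permutations of size `n` with `iar = k` whose last value is below the
first one. -/
noncomputable def strictCount (n k : ℕ) : ℕ :=
  Nat.card {π : Equiv.Perm (Fin n) // (Separable π ∧ StrictEnds π) ∧ iar π = k}

/-- The number of separable permutations of size `n` with `iar = k` whose last value is not below
the first one. -/
noncomputable def nonstrictCount (n k : ℕ) : ℕ :=
  Nat.card {π : Equiv.Perm (Fin n) // (Separable π ∧ ¬ StrictEnds π) ∧ iar π = k}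

theorem card_fiberwise {X Y : Type*} [Finite X] [DecidableEq Y] (Q : X → Prop) (f : X → Y)
    (s : Finset Y) (hs : ∀ x, Q x → f x ∈ s) :
    Nat.card {x // Q x} = ∑ y ∈ s, Nat.card {x // Q x ∧ f x = y} := by
  classical
  have := Fintype.ofFinite X
  simp only [Nat.card_eq_fintype_card, Fintype.card_subtype]
  rw [card_eq_sum_card_fiberwise (f := f) (t := s) (by intro x hx; exact hs x (by simpa using hx))]
  simp only [filter_filter]

/-- Separable permutations with first block of size `a` correspond to pairs of separable permutations,
the first of which ends weakly below its first value; the inverse map is `dsum`. -/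
theorem card_block {a b : ℕ} (ha : 0 < a) (R : Equiv.Perm (Fin (a + b)) → Prop) :
    Nat.card {π : Equiv.Perm (Fin (a + b)) // (Separable π ∧ R π) ∧ firstBlock π = a} =
    Nat.card {x : Equiv.Perm (Fin a) × Equiv.Perm (Fin b) //
      (Separable x.1 ∧ WeakEnds x.1) ∧ Separable x.2 ∧ R (dsum x.1 x.2)} := by
  symm
  refine Nat.card_congr (Equiv.ofBijective (fun x => ⟨dsum x.1.1 x.1.2,
    ⟨(separable_dsum _ _).2 ⟨x.2.1.1, x.2.2.1⟩, x.2.2.2⟩, firstBlock_dsum _ _ x.2.1.2⟩) ⟨?_, ?_⟩)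
  · intro x y hxy
    exact Subtype.ext (dsum_injective (congrArg Subtype.val hxy))
  · rintro ⟨π, ⟨hs, hR⟩, hf⟩
    obtain ⟨α, β, rfl, hw⟩ := exists_dsum_of_firstBlock ha π hs hf
    obtain ⟨hα, hβ⟩ := (separable_dsum _ _).1 hs
    exact ⟨⟨(α, β), ⟨hα, hw⟩, hβ, hR⟩, rfl⟩

theorem card_prod_subtype {X Y : Type*} (A : X → Prop) (B : Y → Prop) :
    Nat.card {x : X × Y // A x.1 ∧ B x.2} = Nat.card {x // A x} * Nat.card {y // B y} := by
  rw [← Nat.card_prod]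
  exact Nat.card_congr Equiv.subtypeProdEquivProd

theorem card_separable_eq_sum {n : ℕ} (R : Equiv.Perm (Fin n) → Prop) :
    Nat.card {π : Equiv.Perm (Fin n) // Separable π ∧ R π} =
    ∑ x ∈ antidiagonal n,
      Nat.card {π : Equiv.Perm (Fin n) // (Separable π ∧ R π) ∧ firstBlock π = x.1} := by
  rw [card_fiberwise _ (fun π => (firstBlock π, n - firstBlock π)) (antidiagonal n)]
  · refine sum_congr rfl fun x hx => Nat.card_congr (Equiv.subtypeEquivRight fun π => ?_)
    rw [HasAntidiagonal.mem_antidiagonal] at hx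
    refine and_congr_right fun _ => ?_
    rw [Prod.ext_iff]
    simp only
    omega
  · intro π _
    have := firstBlock_le π
    rw [HasAntidiagonal.mem_antidiagonal]
    simp only
    omega

/-- Complementation as an involution of the symmetric group. -/
def permComplEquiv (n : ℕ) : Equiv.Perm (Fin n) ≃ Equiv.Perm (Fin n) :=
  ⟨permCompl, permCompl, permCompl_permCompl, permCompl_permCompl⟩

theorem weakEnds_permCompl {n : ℕ} (hn : 0 < n) (π : Equiv.Perm (Fin n)) :
    WeakEnds (permCompl π) ↔ ¬ StrictEnds π := by
  constructor
  · rintro ⟨i, z, hz, hi, h⟩ ⟨i₂, z₂, hz₂, hi₂, h₂⟩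
    obtain rfl : i = i₂ := Fin.ext (by omega)
    obtain rfl : z = z₂ := Fin.ext (by omega)
    exact absurd ((permCompl_lt π _ _).2 h₂) (not_lt.2 h)
  · intro h
    refine ⟨⟨n - 1, by omega⟩, ⟨0, hn⟩, rfl, by simp; omega, ?_⟩
    by_contra hc
    exact h ⟨_, _, rfl, by simp; omega, (permCompl_lt π _ _).1 (not_le.1 hc)⟩

/-- Decomposition by the first skew component, which carries the whole initial ascending run. It is
the direct-sum decomposition of the complement. -/
theorem p_eq_sum_skew (n k : ℕ) (hk : 0 < k) :
    p n k = ∑ x ∈ antidiagonal n, nonstrictCount x.1 k * sepCount x.2 := by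
  have h1 : p n k = Nat.card {π : Equiv.Perm (Fin n) // Separable π ∧ iar (permCompl π) = k} :=
    Nat.card_congr ((permComplEquiv n).subtypeEquiv fun π => by
      change _ ↔ Separable (permCompl π) ∧ iar (permCompl (permCompl π)) = k
      rw [separable_permCompl, permCompl_permCompl])
  rw [h1, card_separable_eq_sum]
  refine sum_congr rfl fun x hx => ?_
  obtain ⟨a, b⟩ := x
  rw [HasAntidiagonal.mem_antidiagonal] at hx
  simp only at hx
  subst hx
  rcases Nat.eq_zero_or_pos a with rfl | ha
  · have e1 : nonstrictCount 0 k = 0 := by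
      refine Nat.card_eq_zero.2 (Or.inl ⟨fun π => ?_⟩)
      have := iar_le π.1
      have := π.2.2
      omega
    rw [e1, zero_mul]
    refine Nat.card_eq_zero.2 (Or.inl ⟨fun π => ?_⟩)
    have h3 := iar_le (permCompl π.1)
    have h4 := π.2.1.2
    have h5 := firstBlock_pos (by omega) π.1
    have h6 := π.2.2
    simp only at h6
    omega
  · rw [card_block ha]
    simp only [iar_permCompl_dsum ha]
    rw [show nonstrictCount a k = Nat.card {α : Equiv.Perm (Fin a) //
      (Separable α ∧ WeakEnds α) ∧ iar (permCompl α) = k} from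
        Nat.card_congr ((permComplEquiv a).subtypeEquiv fun π => by
          change _ ↔ (Separable (permCompl π) ∧ WeakEnds (permCompl π)) ∧
            iar (permCompl (permCompl π)) = k
          rw [separable_permCompl, permCompl_permCompl, weakEnds_permCompl ha])]
    rw [sepCount, ← card_prod_subtype]
    exact Nat.card_congr (Equiv.subtypeEquivRight fun x => by tauto)

/-- Decomposition by the first direct-sum component. A component of size `1` prolongs the initial run
of the rest by one; a larger component contains the whole initial run. -/
theorem p_eq_sum_direct (n k : ℕ) (hk : 0 < k) :
    p n k = ∑ x ∈ antidiagonal n, ((if x.1 = 1 then 1 else 0) * p x.2 (k - 1) +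
      strictCount x.1 k * sepCount x.2) := by
  rw [p, card_separable_eq_sum]
  refine sum_congr rfl fun x hx => ?_
  obtain ⟨a, b⟩ := x
  rw [HasAntidiagonal.mem_antidiagonal] at hx
  simp only at hx
  subst hx
  have h01 : a ≤ 1 → strictCount a k = 0 := by
    intro ha
    refine Nat.card_eq_zero.2 (Or.inl ⟨fun π => ?_⟩)
    obtain ⟨i, z, hz, hi, h⟩ := π.2.1.2
    obtain rfl : i = z := Fin.ext (by omega)
    exact lt_irrefl _ h
  rcases Nat.eq_zero_or_pos a with rfl | ha
  · rw [h01 (by omega)]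
    simp only [zero_ne_one, if_false, zero_mul, add_zero]
    refine Nat.card_eq_zero.2 (Or.inl ⟨fun π => ?_⟩)
    have h3 := iar_le π.1
    have h4 := π.2.1.2
    have h5 := firstBlock_pos (by omega) π.1
    have h6 := π.2.2
    omega
  rw [card_block ha]
  by_cases h1 : a = 1
  · subst h1
    rw [h01 le_rfl]
    simp only [if_true, one_mul, zero_mul, add_zero, iar_one_dsum]
    rw [card_prod_subtype (fun α : Equiv.Perm (Fin 1) => Separable α ∧ WeakEnds α)
      (fun β : Equiv.Perm (Fin b) => Separable β ∧ iar β + 1 = k)]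
    have e1 : Nat.card {α : Equiv.Perm (Fin 1) // Separable α ∧ WeakEnds α} = 1 := by
      rw [Nat.card_eq_one_iff_unique]
      refine ⟨inferInstance, ⟨⟨1, (separable_iff _).2 fun i j k l hij => ?_, ?_⟩⟩⟩
      · rw [Subsingleton.elim i j] at hij; exact absurd hij (lt_irrefl _)
      · exact ⟨0, 0, rfl, rfl, le_rfl⟩
    rw [e1, one_mul, p]
    exact Nat.card_congr (Equiv.subtypeEquivRight fun x => and_congr_right fun _ => by omega)
  · simp only [h1, if_false, zero_mul, zero_add]
    rw [sepCount, strictCount, ← card_prod_subtype]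
    refine Nat.card_congr (Equiv.subtypeEquivRight fun x => ?_)
    have hw : WeakEnds x.1 ↔ StrictEnds x.1 := by
      constructor
      · rintro ⟨i, z, hz, hi, h⟩
        refine ⟨i, z, hz, hi, lt_of_le_of_ne h fun h => ?_⟩
        have := congrArg Fin.val (x.1.injective h)
        omega
      · rintro ⟨i, z, hz, hi, h⟩
        exact ⟨i, z, hz, hi, h.le⟩
    rw [hw]
    constructor
    · rintro ⟨h1, h2, h3⟩
      rw [iar_dsum_of_strictEnds _ _ h1.2] at h3
      exact ⟨⟨h1, h3⟩, h2⟩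
    · rintro ⟨⟨h1, h3⟩, h2⟩
      refine ⟨h1, h2, ?_⟩
      rwa [iar_dsum_of_strictEnds _ _ h1.2]

theorem p_eq_add (n k : ℕ) : p n k = strictCount n k + nonstrictCount n k := by
  classical
  simp only [p, strictCount, nonstrictCount, Nat.card_eq_fintype_card, Fintype.card_subtype]
  rw [← card_filter_add_card_filter_not (s := univ.filter fun π : Equiv.Perm (Fin n) =>
    Separable π ∧ iar π = k) StrictEnds, filter_filter, filter_filter]
  congr 2 <;> ext π <;> simp <;> tauto

theorem sepCount_eq (n : ℕ) : sepCount n = ∑ k ∈ range (n + 1), p n k :=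
  card_fiberwise _ iar _ fun π _ => mem_range.2 (Nat.lt_succ_of_le (iar_le π))

theorem p_zero_right (n : ℕ) : p n 0 = if n = 0 then 1 else 0 := by
  split_ifs with h
  · subst h
    rw [p, Nat.card_eq_one_iff_unique]
    refine ⟨inferInstance, ⟨⟨1, (separable_iff _).2 fun i => i.elim0, ?_⟩⟩⟩
    exact Nat.le_zero.1 (iar_le _)
  · refine Nat.card_eq_zero.2 (Or.inl ⟨fun π => ?_⟩)
    have := iar_pos (Nat.pos_of_ne_zero h) π.1
    have := π.2.2
    omega

/-! ### Generating functions -/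

open PowerSeries

/-- The generating function `∑ₙ p(n,k) Xⁿ`. -/
noncomputable def pSeries (k : ℕ) : ℤ⟦X⟧ := PowerSeries.mk fun n => (p n k : ℤ)

/-- The generating function of all separable permutations, the empty one included. -/
noncomputable def sepSeries : ℤ⟦X⟧ := PowerSeries.mk fun n => (sepCount n : ℤ)

/-- With `I`, `J` the generating functions of `strictCount` and `nonstrictCount`, the two
decompositions read `P (k+1) = J * T` and `P (k+1) = X * P k + I * T`, while `P (k+1) = I + J`;
eliminating `I` and `J` gives the claim. -/
theorem pSeries_step (k : ℕ) : (2 - sepSeries) * pSeries (k + 1) = X * pSeries k := by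
  set I : ℤ⟦X⟧ := PowerSeries.mk fun n => (strictCount n (k + 1) : ℤ)
  set J : ℤ⟦X⟧ := PowerSeries.mk fun n => (nonstrictCount n (k + 1) : ℤ)
  have h1 : pSeries (k + 1) = J * sepSeries := by
    ext n
    rw [coeff_mul]
    simp only [pSeries, J, sepSeries, coeff_mk]
    exact_mod_cast p_eq_sum_skew n (k + 1) k.succ_pos
  have h2 : pSeries (k + 1) = X * pSeries k + I * sepSeries := by
    ext n
    rw [map_add, coeff_mul, coeff_mul, ← sum_add_distrib]
    simp only [pSeries, I, sepSeries, coeff_mk, coeff_X]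
    exact_mod_cast p_eq_sum_direct n (k + 1) k.succ_pos
  have h3 : pSeries (k + 1) = I + J := by
    ext n
    simp only [pSeries, I, J, coeff_mk, map_add]
    exact_mod_cast p_eq_add n (k + 1)
  linear_combination h1 + h2 - sepSeries * h3

theorem pSeries_zero : pSeries 0 = 1 := by
  ext n
  simp [pSeries, coeff_one, p_zero_right]

theorem sepSeries_ne : (2 - sepSeries) ≠ 0 := by
  intro h
  have h1 := pSeries_step 0
  rw [h, zero_mul, pSeries_zero, mul_one] at h1
  exact X_ne_zero h1.symm

theorem pSeries_eq_pow (k : ℕ) : pSeries k = pSeries 1 ^ k := by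
  induction k with
  | zero => rw [pSeries_zero, pow_zero]
  | succ k ih =>
    apply mul_left_cancel₀ sepSeries_ne
    have h1 := pSeries_step 0
    rw [pSeries_zero] at h1
    rw [pSeries_step, ih]
    linear_combination (-(pSeries 1 ^ k)) * h1

theorem coeff_pow_eq_zero {u : ℤ⟦X⟧} (hu : constantCoeff u = 0) {m i : ℕ} (h : m < i) :
    coeff m (u ^ i) = 0 :=
  X_pow_dvd_iff.1 (pow_dvd_pow_of_dvd (X_dvd_iff.2 hu) i) m h

/-- The geometric series `∑_{j ≥ k} c^(j-k) u^j = u^k / (1 - c u)` for `u` without constant term, the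
coefficient of `X^m` being a finite sum since `u^j` contributes nothing for `j > m`. -/
theorem geom_mul {u : ℤ⟦X⟧} (hu : constantCoeff u = 0) (c : ℤ) (k : ℕ) :
    (PowerSeries.mk fun m => ∑ j ∈ Ico k (m + 1), c ^ (j - k) * coeff m (u ^ j)) * (1 - C c * u)
      = u ^ k := by
  ext n
  have hG : ∀ m ≤ n, ∑ j ∈ Ico k (m + 1), c ^ (j - k) * coeff m (u ^ j) =
      coeff m (u ^ k * ∑ i ∈ range (n + 1), (C c * u) ^ i) := by
    intro m hm
    have e : ∀ i, u ^ k * (C c * u) ^ i = C (c ^ i) * u ^ (k + i) := by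
      intro i; rw [map_pow]; ring
    simp only [mul_sum, map_sum, e, coeff_C_mul]
    rw [sum_Ico_eq_sum_range]
    simp only [Nat.add_sub_cancel_left]
    refine sum_subset (range_subset_range.2 (by omega)) fun i _ hi => ?_
    rw [mem_range] at hi
    rw [coeff_pow_eq_zero hu (by omega), mul_zero]
  have h1 : coeff n ((PowerSeries.mk fun m => ∑ j ∈ Ico k (m + 1), c ^ (j - k) * coeff m (u ^ j))
      * (1 - C c * u)) =
      coeff n ((u ^ k * ∑ i ∈ range (n + 1), (C c * u) ^ i) * (1 - C c * u)) := by
    rw [coeff_mul, coeff_mul]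
    refine sum_congr rfl fun x hx => ?_
    rw [coeff_mk, hG x.1 (by rw [HasAntidiagonal.mem_antidiagonal] at hx; omega)]
  rw [h1, mul_assoc, geom_sum_mul_neg, mul_sub, mul_one, map_sub, sub_eq_self, mul_pow,
    ← map_pow, mul_left_comm, coeff_C_mul, ← pow_add, coeff_pow_eq_zero hu (by omega), mul_zero]

/-- For all integers `2 ≤ k ≤ n`,
`p(n,k) = p(n-1,k-1) + Σ_{j=k}^{n-1} 2^{j-k} ⬝ p(n-1,j)`. -/
theorem stmt8 (n k : ℕ) (hk : 2 ≤ k) (hkn : k ≤ n) :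
    p n k = p (n - 1) (k - 1) + ∑ j ∈ Finset.Ico k n, 2 ^ (j - k) * p (n - 1) j := by
  have hu : constantCoeff (pSeries 1) = 0 := by
    have : p 0 1 = 0 := Nat.card_eq_zero.2 (Or.inl ⟨fun π => by
      have h1 := iar_le π.1
      have h2 := π.2.2
      omega⟩)
    rw [← coeff_zero_eq_constantCoeff_apply, pSeries, coeff_mk, this, Nat.cast_zero]
  have hp : ∀ n k, (p n k : ℤ) = coeff n (pSeries 1 ^ k) := by
    intro n k; rw [← pSeries_eq_pow, pSeries, coeff_mk]
  have hT : sepSeries * (1 - pSeries 1) = 1 := by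
    have h := geom_mul hu 1 0
    rw [pow_zero, map_one, one_mul] at h
    -- every separable permutation of size `m` has some `iar ≤ m`, so `sepSeries = ∑ⱼ uʲ`
    rwa [show sepSeries = PowerSeries.mk fun m =>
        ∑ j ∈ Ico 0 (m + 1), (1 : ℤ) ^ (j - 0) * coeff m (pSeries 1 ^ j) from by
      ext m
      simp [sepSeries, sepCount_eq, hp]]
  have hD := geom_mul hu 2 k
  set D : ℤ⟦X⟧ := PowerSeries.mk fun m =>
    ∑ j ∈ Ico k (m + 1), 2 ^ (j - k) * coeff m (pSeries 1 ^ j) with hDdef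
  obtain ⟨k, rfl⟩ : ∃ k₂, k = k₂ + 1 := ⟨k - 1, by omega⟩
  obtain ⟨n, rfl⟩ : ∃ n₂, n = n₂ + 1 := ⟨n - 1, by omega⟩
  have hu1 : (1 - 2 * pSeries 1) * pSeries 1 = X * (1 - pSeries 1) := by
    have h1 := pSeries_step 0
    rw [pSeries_zero, zero_add] at h1
    linear_combination (1 - pSeries 1) * h1 + pSeries 1 * hT
  have h2 : (C 2 : ℤ⟦X⟧) = 2 := map_ofNat C 2
  rw [h2] at hD
  have hne : (1 - 2 * pSeries 1) ≠ 0 := by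
    intro h
    have := congrArg constantCoeff h
    simp [hu] at this
  have key : pSeries 1 ^ (k + 1) = X * (pSeries 1 ^ k + D) := by
    apply mul_left_cancel₀ hne
    linear_combination (pSeries 1 ^ k) * hu1 - X * hD
  have := congrArg (coeff (n + 1)) key
  rw [coeff_succ_X_mul, map_add, hDdef, coeff_mk, ← hp, ← hp] at this
  simp only [← hp] at this
  simp only [Nat.add_sub_cancel]
  exact_mod_cast this
end
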